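/- arXiv:2404.02493 — 2 statements merged into one kernel-verified Lean document; each statement's English description precedes it below -/
import Mathlib

section
/- Assume 0 < k²h² < 2 and define the smoothing factor g(ω) = sup over θ ∈ [π/2, π] of |1 − ω·(1 − 2cos(θ)/(2 − k²h²))|. Then the choice ω₀ = (2 − k²h²)/(3 − k²h²) minimizes g over all real ω, and the minimum value is g(ω₀) = 1/(3 − k²h²); that is, g(ω₀) = 1/(3 − k²h²) ≤ g(ω) for every ω ∈ ℝ. -/
open Real

/-- The smoothing factor of the damped Jacobi method for the 1D Helmholtz FD
discretization: `g(ω) = sup_{θ ∈ [π/2, π]} |1 - ω·(1 - 2cos(θ)/(2 - k²h²))|`. -/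
noncomputable def smoothingFactor (k h ω : ℝ) : ℝ :=
  sSup ((fun θ => |1 - ω * (1 - 2 * Real.cos θ / (2 - k ^ 2 * h ^ 2))|) ''
    Set.Icc (π / 2) π)

/-!
With `s = 2 - k²h²`, the numbers `1 - 2 cos θ / s` for `θ ∈ [π/2, π]` fill the interval
`[1, 1 + 2 / s]`, so the smoothing factor is the worst-case damping `|1 - ω x|` over an interval
`[a, b]` of positive reals. By convexity it is attained at an endpoint, and the two endpoint values
balance at `ω = 2 / (a + b)`, where both equal `(b - a) / (a + b)`. No other `ω` does better,
because `(b - a) / (a + b)` is the weighted mean of `1 - ω a` and `ω b - 1` with weights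
`b / (a + b)` and `a / (a + b)`.
-/

section Damping

variable {a b : ℝ}

theorem sSup_abs_one_sub_mul_image_Icc (hab : a ≤ b) (ω : ℝ) :
    sSup ((fun x => |1 - ω * x|) '' Set.Icc a b) = max |1 - ω * a| |1 - ω * b| := by
  have hconvex : ConvexOn ℝ Set.univ fun x : ℝ => |1 - ω * x| :=
    (convexOn_dist 1 convex_univ).comp_linearMap (LinearMap.mul ℝ ℝ ω) |>.congr fun x _ => by
      simp [Real.dist_eq, abs_sub_comm]
  refine IsGreatest.csSup_eq ⟨?_, ?_⟩
  · rcases max_choice |1 - ω * a| |1 - ω * b| with hmax | hmax <;> rw [hmax]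
    · exact ⟨a, Set.left_mem_Icc.2 hab, rfl⟩
    · exact ⟨b, Set.right_mem_Icc.2 hab, rfl⟩
  · rintro _ ⟨x, hx, rfl⟩
    exact hconvex.le_max_of_mem_Icc (Set.mem_univ a) (Set.mem_univ b) hx

theorem sub_div_add_le_max_abs_one_sub_mul (ha : 0 ≤ a) (hb : 0 ≤ b) (hab : 0 < a + b) (ω : ℝ) :
    (b - a) / (a + b) ≤ max |1 - ω * a| |1 - ω * b| := by
  rw [div_le_iff₀ hab]
  set M := max |1 - ω * a| |1 - ω * b|
  have hleft : 1 - ω * a ≤ M := (le_abs_self _).trans (le_max_left _ _)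
  have hright : -(1 - ω * b) ≤ M := (neg_le_abs _).trans (le_max_right _ _)
  calc
    b - a = b * (1 - ω * a) + a * -(1 - ω * b) := by ring
    _ ≤ b * M + a * M := by gcongr
    _ = M * (a + b) := by ring

theorem max_abs_one_sub_two_div_add_mul (hab : a ≤ b) (hpos : 0 < a + b) :
    max |1 - 2 / (a + b) * a| |1 - 2 / (a + b) * b| = (b - a) / (a + b) := by
  have hleft : 1 - 2 / (a + b) * a = (b - a) / (a + b) := by field_simp; ring
  have hright : 1 - 2 / (a + b) * b = -((b - a) / (a + b)) := by field_simp; ring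
  rw [hleft, hright, abs_neg, max_self, abs_of_nonneg (div_nonneg (sub_nonneg.2 hab) hpos.le)]

end Damping

theorem image_one_sub_two_mul_cos_div_Icc {s : ℝ} (hs : 0 < s) :
    (fun θ => 1 - 2 * cos θ / s) '' Set.Icc (π / 2) π = Set.Icc 1 (1 + 2 / s) := by
  have hmono : MonotoneOn (fun θ => 1 - 2 * cos θ / s) (Set.Icc (π / 2) π) := by
    intro x hx y hy hxy
    have hcos : cos y ≤ cos x :=
      cos_le_cos_of_nonneg_of_le_pi (pi_div_two_pos.le.trans hx.1) hy.2 hxy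
    dsimp only
    gcongr
  have hcont : ContinuousOn (fun θ => 1 - 2 * cos θ / s) (Set.Icc (π / 2) π) := by fun_prop
  rw [hcont.image_Icc_of_monotoneOn (half_le_self pi_pos.le) hmono]
  simp [neg_div]

theorem smoothingFactor_eq_max {k h : ℝ} (hkh : k ^ 2 * h ^ 2 < 2) (ω : ℝ) :
    smoothingFactor k h ω = max |1 - ω| |1 - ω * (1 + 2 / (2 - k ^ 2 * h ^ 2))| := by
  have hs : 0 < 2 - k ^ 2 * h ^ 2 := sub_pos.2 hkh
  have hle : 1 ≤ 1 + 2 / (2 - k ^ 2 * h ^ 2) := le_add_of_nonneg_right (by positivity)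
  have hmax := sSup_abs_one_sub_mul_image_Icc hle ω
  rwa [mul_one, ← image_one_sub_two_mul_cos_div_Icc hs, Set.image_image] at hmax

/-- Assume `0 < k²h² < 2`.  Then `ω₀ = (2 - k²h²)/(3 - k²h²)` minimizes the smoothing
factor `g` over all real `ω`, and the minimum value is `g(ω₀) = 1/(3 - k²h²)`. -/
theorem stmt5 (k h : ℝ) (hkh : 0 < k ^ 2 * h ^ 2) (hkh2 : k ^ 2 * h ^ 2 < 2) :
    smoothingFactor k h ((2 - k ^ 2 * h ^ 2) / (3 - k ^ 2 * h ^ 2)) =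
        1 / (3 - k ^ 2 * h ^ 2) ∧
      ∀ ω : ℝ,
        smoothingFactor k h ((2 - k ^ 2 * h ^ 2) / (3 - k ^ 2 * h ^ 2)) ≤
          smoothingFactor k h ω := by
  have hs : 0 < 2 - k ^ 2 * h ^ 2 := sub_pos.2 hkh2
  have hs' : 0 < 3 - k ^ 2 * h ^ 2 := by linarith
  set b := 1 + 2 / (2 - k ^ 2 * h ^ 2) with hb
  have hb_one : 1 ≤ b := le_add_of_nonneg_right (by positivity)
  have hsum : 1 + b = 2 * (3 - k ^ 2 * h ^ 2) / (2 - k ^ 2 * h ^ 2) := by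
    rw [hb]; field_simp; ring
  have hω₀ : (2 - k ^ 2 * h ^ 2) / (3 - k ^ 2 * h ^ 2) = 2 / (1 + b) := by
    rw [hsum]; field_simp
  have hvalue : 1 / (3 - k ^ 2 * h ^ 2) = (b - 1) / (1 + b) := by
    rw [hsum, hb]; field_simp; ring
  have hmin : smoothingFactor k h (2 / (1 + b)) = (b - 1) / (1 + b) := by
    simpa only [smoothingFactor_eq_max hkh2, mul_one] using
      max_abs_one_sub_two_div_add_mul hb_one (by linarith)
  rw [hω₀, hvalue, hmin]
  refine ⟨rfl, fun ω => ?_⟩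
  simpa only [smoothingFactor_eq_max hkh2, mul_one] using
    sub_div_add_le_max_abs_one_sub_mul zero_le_one (by linarith : 0 ≤ b) (by linarith) ω
end

section
/- Assume k²h² > 2 and that all eigenvalues of A are negative, i.e., (4/h²)·sin²(Nπh/2) < k² (so A is negative definite). Then all eigenvalues μ_j = 1 − ω·(1 − 2cos(jπh)/(2 − k²h²)) of the damped Jacobi error-propagation matrix S_ω = I − ω D⁻¹ A satisfy |μ_j| < 1 for every j = 1, …, N if and only if 0 < ω < ω₁, where ω₁ = (2 − k²h²)/(2sin²(πh/2) − k²h²/2). -/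
open Real

/-- Mesh size `h = 1/(N+1)`. -/
noncomputable def meshH (N : ℕ) : ℝ := 1 / (N + 1)

/-- The damped Jacobi eigenvalue `μ_j = 1 - ω·(1 - 2cos(jπh)/(2 - k²h²))` of the
error-propagation matrix `S_ω = I - ω D⁻¹ A`. -/
noncomputable def jacobiEig (N : ℕ) (k ω : ℝ) (j : ℕ) : ℝ :=
  1 - ω * (1 - 2 * Real.cos (j * π * meshH N) / (2 - k ^ 2 * (meshH N) ^ 2))

/-!
Each eigenvalue has the form `μ_j = 1 - ω a_j`, where `a_j = λ_j / d` is the quotient of the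
eigenvalue `λ_j` of `A` by the diagonal entry `d = (2 - k²h²)/h²`. Both are negative, so `a_j > 0`
and `|μ_j| < 1` means `0 < ω < 2 / a_j`. Since `d < 0`, the increasing `λ_j` give decreasing `a_j`:
the binding constraint is the smoothest mode `j = 1`, and `2 / a_1 = ω₁`.
-/

section Damping

variable {K : Type*} [Field K] [LinearOrder K] [IsStrictOrderedRing K]

theorem abs_one_sub_mul_lt_one_iff {a ω : K} (ha : 0 < a) :
    |1 - ω * a| < 1 ↔ 0 < ω ∧ ω < 2 / a := by
  rw [abs_sub_lt_iff, sub_lt_self_iff, mul_pos_iff_of_pos_right ha, lt_div_iff₀ ha,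
    sub_lt_iff_lt_add, one_add_one_eq_two]

theorem forall_abs_one_sub_mul_lt_one_iff {ι : Type*} {a : ι → K} {ω : K} {i₀ : ι}
    (ha : ∀ i, 0 < a i) (hmax : ∀ i, a i ≤ a i₀) :
    (∀ i, |1 - ω * a i| < 1) ↔ 0 < ω ∧ ω < 2 / a i₀ := by
  simp only [abs_one_sub_mul_lt_one_iff (ha _)]
  refine ⟨fun hω => hω i₀, fun ⟨hω, hω_lt⟩ i => ⟨hω, hω_lt.trans_le ?_⟩⟩
  exact div_le_div_of_nonneg_left zero_le_two (ha i) (hmax i)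

end Damping

/-- The symbol of `D⁻¹ A` at frequency `θ`, with `s = k²h²`: its values at `θ = jπh` are the
eigenvalues of `D⁻¹ A`. It takes the junk value `1` at `s = 2`, where `D = 0`. -/
noncomputable def jacobiSymbol (s θ : ℝ) : ℝ := 1 - 2 * cos θ / (2 - s)

section Symbol

variable {s θ : ℝ}

theorem jacobiSymbol_eq_sin_sq (hs : s ≠ 2) :
    jacobiSymbol s θ = (4 * sin (θ / 2) ^ 2 - s) / (2 - s) := by
  have hs' : 2 - s ≠ 0 := sub_ne_zero.mpr hs.symm
  rw [jacobiSymbol, sin_sq_eq_half_sub, mul_div_cancel₀ θ two_ne_zero]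
  field_simp
  ring

theorem jacobiSymbol_pos_iff (hs : 2 < s) :
    0 < jacobiSymbol s θ ↔ 4 * sin (θ / 2) ^ 2 < s := by
  rw [jacobiSymbol_eq_sin_sq hs.ne', lt_div_iff_of_neg (sub_neg.mpr hs), zero_mul, sub_neg]

theorem two_div_jacobiSymbol (hs : s ≠ 2) :
    2 / jacobiSymbol s θ = (2 - s) / (2 * sin (θ / 2) ^ 2 - s / 2) := by
  have halve : 2 * sin (θ / 2) ^ 2 - s / 2 = (4 * sin (θ / 2) ^ 2 - s) / 2 := by ring
  rw [jacobiSymbol_eq_sin_sq hs, halve, div_div_eq_mul_div, div_div_eq_mul_div, mul_comm]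

theorem antitoneOn_jacobiSymbol (hs : 2 < s) : AntitoneOn (jacobiSymbol s) (Set.Icc 0 π) := by
  intro α hα β hβ hαβ
  have hcos : cos β ≤ cos α := antitoneOn_cos hα hβ hαβ
  have hdiv : 2 * cos α / (2 - s) ≤ 2 * cos β / (2 - s) :=
    div_le_div_of_nonpos_of_le (sub_neg.mpr hs).le (by linarith)
  exact sub_le_sub_left hdiv 1

end Symbol

theorem meshH_pos (N : ℕ) : 0 < meshH N := Nat.one_div_pos_of_nat

theorem mul_pi_mul_meshH_mem_Icc {N j : ℕ} (hj : j ≤ N + 1) :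
    j * π * meshH N ∈ Set.Icc 0 π := by
  have hh := meshH_pos N
  refine ⟨by positivity, ?_⟩
  calc j * π * meshH N ≤ (N + 1 : ℕ) * π * meshH N := by gcongr
    _ = π := by
      rw [meshH]
      push_cast
      field_simp

theorem jacobiSymbol_meshH_le {N i j : ℕ} {s : ℝ} (hs : 2 < s) (hij : i ≤ j) (hj : j ≤ N + 1) :
    jacobiSymbol s (j * π * meshH N) ≤ jacobiSymbol s (i * π * meshH N) := by
  have hh := meshH_pos N
  exact antitoneOn_jacobiSymbol hs (mul_pi_mul_meshH_mem_Icc (hij.trans hj))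
    (mul_pi_mul_meshH_mem_Icc hj) (by gcongr)

theorem jacobiEig_eq_one_sub_mul_jacobiSymbol (N : ℕ) (k ω : ℝ) (j : ℕ) :
    jacobiEig N k ω j = 1 - ω * jacobiSymbol (k ^ 2 * meshH N ^ 2) (j * π * meshH N) :=
  rfl

/-- Assume `k²h² > 2` and that all eigenvalues of `A` are negative, i.e.
`(4/h²)·sin²(Nπh/2) < k²` (so `A` is negative definite).  Then all eigenvalues
`μ_j = 1 - ω·(1 - 2cos(jπh)/(2 - k²h²))` of the damped Jacobi error-propagation
matrix satisfy `|μ_j| < 1` for every `j = 1, …, N` if and only if `0 < ω < ω₁`,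
where `ω₁ = (2 - k²h²)/(2sin²(πh/2) - k²h²/2)`. -/
theorem stmt6 (N : ℕ) (hN : 0 < N) (k : ℝ) (hk : 0 < k)
    (hkh : 2 < k ^ 2 * (meshH N) ^ 2)
    (hneg : 4 / (meshH N) ^ 2 * Real.sin (N * π * meshH N / 2) ^ 2 < k ^ 2) (ω : ℝ) :
    (∀ j : Fin N, |jacobiEig N k ω (j.1 + 1)| < 1) ↔
      (0 < ω ∧
        ω < (2 - k ^ 2 * (meshH N) ^ 2) /
          (2 * Real.sin (π * meshH N / 2) ^ 2 - k ^ 2 * (meshH N) ^ 2 / 2)) := by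
  set s := k ^ 2 * meshH N ^ 2
  have hpos_last : 0 < jacobiSymbol s (N * π * meshH N) := by
    have hh := meshH_pos N
    rwa [jacobiSymbol_pos_iff hkh, ← div_lt_iff₀ (by positivity), ← div_mul_eq_mul_div]
  let a (j : Fin N) : ℝ := jacobiSymbol s ((j.1 + 1 : ℕ) * π * meshH N)
  have hpos (j : Fin N) : 0 < a j :=
    hpos_last.trans_le (jacobiSymbol_meshH_le hkh j.2 N.le_succ)
  have hmax (j : Fin N) : a j ≤ a ⟨0, hN⟩ :=
    jacobiSymbol_meshH_le hkh (by lia) (by lia)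
  have hfirst : a ⟨0, hN⟩ = jacobiSymbol s (π * meshH N) := by
    simp only [a, zero_add, Nat.cast_one, one_mul]
  simp only [jacobiEig_eq_one_sub_mul_jacobiSymbol]
  rw [← two_div_jacobiSymbol hkh.ne', ← hfirst]
  exact forall_abs_one_sub_mul_lt_one_iff hpos hmax
end
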